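/- arXiv:solv-int/9509001 — 2 statements merged into one kernel-verified Lean document; each statement's English description precedes it below -/
import Mathlib

section
/- The operators S_l = Σ_i x_i D_i^l and I_n = Σ_i D_i^n satisfy the algebra [I_l, I_n] = 0, [S_l, I_n] = −n I_{l+n−1}, and [S_l, S_n] = (l − n) S_{l+n−1}, for all l ≥ 0 and n ≥ 1. -/
open Finset

noncomputable section

/-- The open set of points with pairwise distinct coordinates. -/
def Omega (N : ℕ) : Set (Fin N → ℝ) := {x | Function.Injective x}

/-- The coordinate-swap (transposition) operator `P_{ij}`. -/
def Pswap {N : ℕ} (i j : Fin N) (f : (Fin N → ℝ) → ℝ) : (Fin N → ℝ) → ℝ :=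
  fun x => f (x ∘ Equiv.swap i j)

/-- The difference operator `Δ_i = ∑_{j ≠ i} (x_i - x_j)⁻¹ (1 - P_{ij})`. -/
def Delta {N : ℕ} (i : Fin N) (f : (Fin N → ℝ) → ℝ) : (Fin N → ℝ) → ℝ :=
  fun x => ∑ j ∈ Finset.univ.erase i, (f x - f (x ∘ Equiv.swap i j)) / (x i - x j)

/-- The partial derivative operator `∂_i`. -/
def pd {N : ℕ} (i : Fin N) (f : (Fin N → ℝ) → ℝ) : (Fin N → ℝ) → ℝ :=
  fun x => fderiv ℝ f x (Pi.single i 1)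

/-- Multiplication by the `i`-th coordinate. -/
def xmul {N : ℕ} (i : Fin N) (f : (Fin N → ℝ) → ℝ) : (Fin N → ℝ) → ℝ :=
  fun x => x i * f x

/-- The Dunkl operator `D_i = ∂_i + g Δ_i`. -/
def Dunkl {N : ℕ} (g : ℝ) (i : Fin N) (f : (Fin N → ℝ) → ℝ) : (Fin N → ℝ) → ℝ :=
  fun x => pd i f x + g * Delta i f x

/-- `S_l = ∑_i x_i D_i^l`. -/
def Sop {N : ℕ} (g : ℝ) (l : ℕ) (f : (Fin N → ℝ) → ℝ) : (Fin N → ℝ) → ℝ :=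
  fun x => ∑ i, x i * (Dunkl g i)^[l] f x

/-- `I_n = ∑_i D_i^n`. -/
def Iop {N : ℕ} (g : ℝ) (n : ℕ) (f : (Fin N → ℝ) → ℝ) : (Fin N → ℝ) → ℝ :=
  fun x => ∑ i, (Dunkl g i)^[n] f x

section Alg
variable {N : ℕ} {A : Type*} [Ring A] (D X : Fin N → A) (Q : Fin N → Fin N → A)

def RR (n : ℕ) (i j : Fin N) : A := ∑ k ∈ range n, D i ^ k * D j ^ (n - 1 - k)

theorem RR_succ (hDD : ∀ i j, Commute (D i) (D j)) (n : ℕ) (i j : Fin N) :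
    RR D (n+1) i j = D j ^ n + D i * RR D n i j := by
  unfold RR
  rw [sum_range_succ', add_comm, mul_sum]
  congr 1
  · simp
  · apply sum_congr rfl
    intro k hk
    rw [← mul_assoc, ← pow_succ']
    congr 2
    omega

theorem RR_symm (hDD : ∀ i j, Commute (D i) (D j)) (n : ℕ) (i j : Fin N) :
    RR D n i j = RR D n j i := by
  unfold RR
  rw [← sum_range_reflect]
  apply sum_congr rfl
  intro k hk
  rw [((hDD i j).pow_pow _ _).eq]
  congr 2
  have := mem_range.1 hk
  omega

theorem Q_pow (hQ : ∀ i j, Q i j * D j = D i * Q i j) (n : ℕ) (i j : Fin N) :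
    Q i j * D j ^ n = D i ^ n * Q i j :=
  (SemiconjBy.pow_right (show SemiconjBy (Q i j) (D j) (D i) from hQ i j) n)

theorem pow_off (hDD : ∀ i j, Commute (D i) (D j))
    (hQ : ∀ i j, Q i j * D j = D i * Q i j) (hQs : ∀ i j, Q i j = Q j i)
    (hoff : ∀ i j, i ≠ j → D i * X j = X j * D i - Q i j) (n : ℕ) (i j : Fin N) (hij : i ≠ j) :
    D i ^ n * X j = X j * D i ^ n - RR D n i j * Q i j := by
  induction n with
  | zero => simp [RR]
  | succ n ih =>
    rw [RR_succ D hDD, pow_succ', mul_assoc, ih, mul_sub, ← mul_assoc, hoff i j hij, sub_mul,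
      hQs i j, Q_pow D Q hQ n j i]
    noncomm_ring

theorem pow_diag (hDD : ∀ i j, Commute (D i) (D j))
    (hQ : ∀ i j, Q i j * D j = D i * Q i j) (hQs : ∀ i j, Q i j = Q j i)
    (hdiag : ∀ i, D i * X i = X i * D i + 1 + ∑ k ∈ univ.erase i, Q i k) (n : ℕ) (i : Fin N) :
    D i ^ n * X i = X i * D i ^ n + n • D i ^ (n - 1) + ∑ k ∈ univ.erase i, RR D n i k * Q i k := by
  induction n with
  | zero => simp [RR]
  | succ n ih =>
    have h1 : ∀ k, RR D (n+1) i k * Q i k = Q i k * D i ^ n + D i * (RR D n i k * Q i k) := by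
      intro k
      rw [RR_succ D hDD, add_mul, hQs i k, Q_pow D Q hQ n k i, mul_assoc]
    have h2 : D i * (n • D i ^ (n - 1)) = n • D i ^ n := by
      cases n with
      | zero => simp
      | succ m => rw [mul_smul_comm, ← pow_succ']; rfl
    rw [pow_succ', mul_assoc, ih, mul_add, mul_add, h2, ← mul_assoc, hdiag i]
    simp only [h1, sum_add_distrib, ← mul_sum, ← sum_mul, add_mul, one_mul, add_smul, one_smul,
      Nat.add_sub_cancel, mul_assoc]
    abel

theorem alg_II (hDD : ∀ i j, Commute (D i) (D j)) (l n : ℕ) :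
    (∑ i, D i ^ l) * (∑ i, D i ^ n) = (∑ i, D i ^ n) * (∑ i, D i ^ l) := by
  apply Commute.sum_left
  intro i _
  apply Commute.sum_right
  intro j _
  exact (hDD i j).pow_pow _ _

theorem alg_SI (hDD : ∀ i j, Commute (D i) (D j))
    (hQ : ∀ i j, Q i j * D j = D i * Q i j) (hQs : ∀ i j, Q i j = Q j i)
    (hoff : ∀ i j, i ≠ j → D i * X j = X j * D i - Q i j)
    (hdiag : ∀ i, D i * X i = X i * D i + 1 + ∑ k ∈ univ.erase i, Q i k) (l n : ℕ) (hn : 1 ≤ n) :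
    (∑ i, D i ^ n) * (∑ i, X i * D i ^ l) = (∑ i, X i * D i ^ l) * (∑ i, D i ^ n)
      + n • ∑ i, D i ^ (l + n - 1) := by
  have key : ∀ j, (∑ i, D i ^ n) * X j = X j * (∑ i, D i ^ n) + n • D j ^ (n - 1) := by
    intro j
    rw [sum_mul, mul_sum, ← add_sum_erase univ _ (mem_univ j),
      ← add_sum_erase univ (fun i => X j * D i ^ n) (mem_univ j),
      pow_diag D X Q hDD hQ hQs hdiag]
    have : ∑ i ∈ univ.erase j, D i ^ n * X j = ∑ i ∈ univ.erase j, X j * D i ^ n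
        - ∑ k ∈ univ.erase j, RR D n j k * Q j k := by
      rw [← sum_sub_distrib]
      apply sum_congr rfl
      intro i hi
      rw [pow_off D X Q hDD hQ hQs hoff n i j (ne_of_mem_erase hi), RR_symm D hDD, hQs]
    rw [this]
    abel
  rw [mul_sum, sum_mul, smul_sum, ← sum_add_distrib]
  apply sum_congr rfl
  intro j _
  have hc : Commute (D j ^ l) (∑ i, D i ^ n) :=
    Commute.sum_right _ _ _ (fun i _ => (hDD j i).pow_pow _ _)
  rw [← mul_assoc, key, add_mul, mul_assoc, mul_assoc, hc.eq, smul_mul_assoc, ← pow_add]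
  congr 3
  omega

theorem alg_W (hDD : ∀ i j, Commute (D i) (D j)) (l n : ℕ) (i j : Fin N) :
    RR D l i j * (D j ^ n - D i ^ n) = RR D n i j * (D j ^ l - D i ^ l) := by
  have h1 : ∀ m, D j ^ m - D i ^ m = (D j - D i) * RR D m j i := fun m =>
    ((hDD j i).mul_geom_sum₂ m).symm
  have cD : ∀ m k, Commute (RR D m j i) (D k) := by
    intro m k
    apply Commute.sum_left
    intro a _
    exact Commute.mul_left ((hDD j k).pow_left _) ((hDD i k).pow_left _)
  have cR : ∀ m m', Commute (RR D m j i) (RR D m' j i) := by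
    intro m m'
    apply Commute.sum_right
    intro a _
    exact Commute.mul_right ((cD m j).pow_right _) ((cD m i).pow_right _)
  rw [h1, h1, RR_symm D hDD l i j, RR_symm D hDD n i j, ← mul_assoc, ← mul_assoc,
    ((cD l j).sub_right (cD l i)).eq, ((cD n j).sub_right (cD n i)).eq, mul_assoc, mul_assoc,
    (cR l n).eq]

theorem alg_SS_aux (hDD : ∀ i j, Commute (D i) (D j))
    (hQ : ∀ i j, Q i j * D j = D i * Q i j) (hQs : ∀ i j, Q i j = Q j i)
    (hoff : ∀ i j, i ≠ j → D i * X j = X j * D i - Q i j)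
    (hdiag : ∀ i, D i * X i = X i * D i + 1 + ∑ k ∈ univ.erase i, Q i k) (l n : ℕ)  :
    (∑ i, X i * D i ^ l) * (∑ i, X i * D i ^ n) =
      ∑ i, ∑ j, X i * X j * (D i ^ l * D j ^ n) + l • ∑ i, X i * D i ^ (l + n - 1)
      + ∑ i, ∑ j ∈ univ.erase i, X i * (RR D l i j * (D j ^ n - D i ^ n)) * Q i j := by
  rw [sum_mul, smul_sum, ← sum_add_distrib, ← sum_add_distrib]
  apply sum_congr rfl
  intro i _
  rw [mul_sum, ← add_sum_erase univ _ (mem_univ i),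
      ← add_sum_erase univ (fun j => X i * X j * (D i ^ l * D j ^ n)) (mem_univ i)]
  have h1 : ∑ j ∈ univ.erase i, X i * D i ^ l * (X j * D j ^ n) =
      ∑ j ∈ univ.erase i, X i * X j * (D i ^ l * D j ^ n)
      - ∑ j ∈ univ.erase i, X i * RR D l i j * D i ^ n * Q i j := by
    rw [← sum_sub_distrib]
    apply sum_congr rfl
    intro j hj
    have e : X i * D i ^ l * (X j * D j ^ n) = X i * (D i ^ l * X j) * D j ^ n := by noncomm_ring
    rw [e, pow_off D X Q hDD hQ hQs hoff l i j (ne_of_mem_erase hj).symm, mul_sub, sub_mul]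
    congr 1
    · noncomm_ring
    · rw [mul_assoc, mul_assoc, Q_pow D Q hQ]; noncomm_ring
  have h2 : X i * D i ^ l * (X i * D i ^ n) = X i * X i * (D i ^ l * D i ^ n)
      + l • (X i * D i ^ (l + n - 1))
      + ∑ j ∈ univ.erase i, X i * RR D l i j * D j ^ n * Q i j := by
    have e : X i * D i ^ l * (X i * D i ^ n) = X i * (D i ^ l * X i) * D i ^ n := by noncomm_ring
    rw [e, pow_diag D X Q hDD hQ hQs hdiag, mul_add, mul_add, add_mul, add_mul, mul_sum, sum_mul]
    congr 1
    · congr 1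
      · noncomm_ring
      · cases l with
        | zero => simp
        | succ m =>
          rw [mul_smul_comm, smul_mul_assoc, mul_assoc, ← pow_add]
          congr 3
          omega
    · apply sum_congr rfl
      intro j _
      rw [mul_assoc, mul_assoc, hQs i j, Q_pow D Q hQ]; noncomm_ring
  have h3 : ∑ j ∈ univ.erase i, X i * (RR D l i j * (D j ^ n - D i ^ n)) * Q i j =
     ∑ j ∈ univ.erase i, X i * RR D l i j * D j ^ n * Q i j -
     ∑ j ∈ univ.erase i, X i * RR D l i j * D i ^ n * Q i j := by
    rw [← sum_sub_distrib]
    apply sum_congr rfl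
    intro j _
    simp only [mul_sub, sub_mul, mul_assoc]
  rw [h1, h2, h3]
  abel

theorem alg_SS (hDD : ∀ i j, Commute (D i) (D j)) (hXX : ∀ i j, Commute (X i) (X j))
    (hQ : ∀ i j, Q i j * D j = D i * Q i j) (hQs : ∀ i j, Q i j = Q j i)
    (hoff : ∀ i j, i ≠ j → D i * X j = X j * D i - Q i j)
    (hdiag : ∀ i, D i * X i = X i * D i + 1 + ∑ k ∈ univ.erase i, Q i k) (l n : ℕ) :
    (∑ i, X i * D i ^ l) * (∑ i, X i * D i ^ n) + n • ∑ i, X i * D i ^ (l + n - 1) =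
    (∑ i, X i * D i ^ n) * (∑ i, X i * D i ^ l) + l • ∑ i, X i * D i ^ (l + n - 1) := by
  rw [alg_SS_aux D X Q hDD hQ hQs hoff hdiag, alg_SS_aux D X Q hDD hQ hQs hoff hdiag,
    sum_comm, add_comm n l]
  have h1 : ∑ y, ∑ x, X x * X y * (D x ^ l * D y ^ n) = ∑ i, ∑ j, X i * X j * (D i ^ n * D j ^ l) := by
    apply sum_congr rfl; intro i _
    apply sum_congr rfl; intro j _
    rw [(hXX j i).eq, ((hDD j i).pow_pow l n).eq]
  simp only [h1, alg_W D hDD l n]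
  abel
end Alg
section An
variable {N : ℕ}

theorem isOpen_Omega : IsOpen (Omega N) := by
  have : Omega N = ⋂ i : Fin N, ⋂ j : Fin N, {x | i ≠ j → x i ≠ x j} := by
    ext x
    simp only [Omega, Set.mem_setOf_eq, Set.mem_iInter, Function.Injective]
    exact ⟨fun h i j hij he => hij (h he), fun h i j he => by_contra fun hij => h i j hij he⟩
  rw [this]
  refine isOpen_iInter_of_finite fun i => isOpen_iInter_of_finite fun j => ?_
  by_cases hij : i = j
  · simp [hij]
  · simp only [ne_eq, hij, not_false_eq_true, forall_const]
    exact isOpen_ne_fun (continuous_apply i) (continuous_apply j)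

theorem Omega_comp (σ : Equiv.Perm (Fin N)) (x : Fin N → ℝ) : x ∘ σ ∈ Omega N ↔ x ∈ Omega N := by
  simp only [Omega, Set.mem_setOf_eq]
  exact Equiv.injective_comp σ x

theorem Omega_ne {x : Fin N → ℝ} (hx : x ∈ Omega N) {i j : Fin N} (h : i ≠ j) : x i - x j ≠ 0 :=
  fun h' => h (hx (sub_eq_zero.1 h'))

variable (N) in
def VV : Submodule ℝ ((Fin N → ℝ) → ℝ) where
  carrier := {f | ContDiffOn ℝ (⊤ : ℕ∞) f (Omega N) ∧ ∀ x, x ∉ Omega N → f x = 0}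
  add_mem' := fun {a b} ha hb => ⟨ha.1.add hb.1, fun x hx => by simp [ha.2 x hx, hb.2 x hx]⟩
  zero_mem' := ⟨contDiffOn_const, fun _ _ => rfl⟩
  smul_mem' := fun c a ha => ⟨contDiffOn_const.smul ha.1, fun x hx => by simp [ha.2 x hx]⟩

theorem VV_ext {F G : VV N} (h : ∀ x ∈ Omega N, F.1 x = G.1 x) : F = G := by
  apply Subtype.ext
  funext x
  by_cases hx : x ∈ Omega N
  · exact h x hx
  · rw [F.2.2 x hx, G.2.2 x hx]

theorem End_ext {F G : Module.End ℝ (VV N)} (h : ∀ f, ∀ x ∈ Omega N, (F f).1 x = (G f).1 x) :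
    F = G := LinearMap.ext fun f => VV_ext (h f)

theorem VV_diff (F : VV N) {x : Fin N → ℝ} (hx : x ∈ Omega N) : DifferentiableAt ℝ F.1 x :=
  (F.2.1.contDiffAt (isOpen_Omega.mem_nhds hx)).differentiableAt (by simp)

theorem pd_congr {f h : (Fin N → ℝ) → ℝ} (e : Set.EqOn f h (Omega N)) (i : Fin N) {x : Fin N → ℝ}
    (hx : x ∈ Omega N) : pd i f x = pd i h x := by
  unfold pd
  rw [Filter.EventuallyEq.fderiv_eq (e.eventuallyEq_of_mem (isOpen_Omega.mem_nhds hx))]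

theorem pd_smooth {f : (Fin N → ℝ) → ℝ} (hf : ContDiffOn ℝ (⊤ : ℕ∞) f (Omega N)) (i : Fin N) :
    ContDiffOn ℝ (⊤ : ℕ∞) (pd i f) (Omega N) := by
  have := hf.fderiv_of_isOpen (m := (⊤ : ℕ∞)) isOpen_Omega (by simp)
  exact this.clm_apply contDiffOn_const

/-- cut off outside Omega -/
def cut (f : (Fin N → ℝ) → ℝ) (hf : ContDiffOn ℝ (⊤ : ℕ∞) f (Omega N)) : VV N :=
  ⟨(Omega N).indicator f, hf.congr fun _ hx => Set.indicator_of_mem hx f,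
    fun _ hx => Set.indicator_of_notMem hx f⟩

theorem cut_apply (f : (Fin N → ℝ) → ℝ) (hf : ContDiffOn ℝ (⊤ : ℕ∞) f (Omega N))
   {x : Fin N → ℝ} (hx : x ∈ Omega N) : (cut f hf).1 x = f x := Set.indicator_of_mem hx f

def del (i : Fin N) : Module.End ℝ (VV N) where
  toFun F := cut (pd i F.1) (pd_smooth F.2.1 i)
  map_add' F G := by
    apply VV_ext
    intro x hx
    change (cut _ _).1 x = (cut _ _).1 x + (cut _ _).1 x
    rw [cut_apply _ _ hx, cut_apply _ _ hx, cut_apply _ _ hx]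
    change fderiv ℝ (F.1 + G.1) x _ = _
    rw [fderiv_add (VV_diff F hx) (VV_diff G hx)]
    rfl
  map_smul' c F := by
    apply VV_ext
    intro x hx
    change (cut _ _).1 x = c • (cut _ _).1 x
    rw [cut_apply _ _ hx, cut_apply _ _ hx]
    change fderiv ℝ (c • F.1) x _ = _
    rw [fderiv_const_smul (VV_diff F hx)]
    rfl

theorem del_apply (i : Fin N) (F : VV N) {x : Fin N → ℝ} (hx : x ∈ Omega N) :
    (del i F).1 x = pd i F.1 x := cut_apply _ (pd_smooth F.2.1 i) hx

theorem add_nsmul_app (n : ℕ) (U C : Module.End ℝ (VV N)) (F : VV N) (x : Fin N → ℝ) :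
    ((U + n • C) F).1 x = (U F).1 x + (n : ℝ) * (C F).1 x := by
  rw [← Nat.cast_smul_eq_nsmul ℝ n C]
  rfl

theorem nsmul_app (n : ℕ) (F : VV N) (x : Fin N → ℝ) : (n • F).1 x = (n : ℝ) * F.1 x := by
  rw [← Nat.cast_smul_eq_nsmul ℝ n F]
  rfl

/-- multiplication -/
def mulop (a : (Fin N → ℝ) → ℝ) (ha : ContDiffOn ℝ (⊤ : ℕ∞) a (Omega N)) :
    Module.End ℝ (VV N) where
  toFun F := ⟨fun x => a x * F.1 x, ha.mul F.2.1, fun x hx => by simp [F.2.2 x hx]⟩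
  map_add' F G := by
    apply Subtype.ext; funext x
    exact mul_add _ _ _
  map_smul' c F := by
    apply Subtype.ext; funext x
    exact mul_left_comm _ _ _

def Xop (i : Fin N) : Module.End ℝ (VV N) := mulop (fun x => x i) (contDiff_apply ℝ ℝ i).contDiffOn

theorem Xop_apply (i : Fin N) (F : VV N) (x : Fin N → ℝ) : (Xop i F).1 x = x i * F.1 x := rfl

theorem Y_smooth (i j : Fin N) : ContDiffOn ℝ (⊤ : ℕ∞) (fun x => (x i - x j)⁻¹) (Omega N) := by
  by_cases h : i = j
  · simp only [h, sub_self, inv_zero]; exact contDiffOn_const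
  · exact ContDiffOn.inv ((contDiff_apply ℝ ℝ i).sub (contDiff_apply ℝ ℝ j)).contDiffOn
      fun x hx => Omega_ne hx h

def Yop (i j : Fin N) : Module.End ℝ (VV N) := mulop (fun x => (x i - x j)⁻¹) (Y_smooth i j)

theorem Yop_apply (i j : Fin N) (F : VV N) (x : Fin N → ℝ) :
    (Yop i j F).1 x = (x i - x j)⁻¹ * F.1 x := rfl

def permL (σ : Equiv.Perm (Fin N)) : (Fin N → ℝ) →L[ℝ] (Fin N → ℝ) :=
  ContinuousLinearMap.pi fun i => ContinuousLinearMap.proj (σ i)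

theorem permL_apply (σ : Equiv.Perm (Fin N)) (x : Fin N → ℝ) : permL σ x = x ∘ σ := rfl

def Pop (σ : Equiv.Perm (Fin N)) : Module.End ℝ (VV N) where
  toFun F := ⟨fun x => F.1 (x ∘ σ),
    F.2.1.comp (permL σ).contDiff.contDiffOn fun x hx => (Omega_comp σ x).2 hx,
    fun x hx => F.2.2 _ (fun h => hx ((Omega_comp σ x).1 h))⟩
  map_add' _ _ := rfl
  map_smul' _ _ := rfl

theorem Pop_apply (σ : Equiv.Perm (Fin N)) (F : VV N) (x : Fin N → ℝ) :
    (Pop σ F).1 x = F.1 (x ∘ σ) := rfl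

theorem del_Pop (i : Fin N) (σ : Equiv.Perm (Fin N)) (F : VV N) {x : Fin N → ℝ}
    (hx : x ∈ Omega N) : (del i (Pop σ F)).1 x = (del (σ⁻¹ i) F).1 (x ∘ σ) := by
  have hx' := (Omega_comp σ x).2 hx
  rw [del_apply _ _ hx, del_apply _ _ hx']
  have h := (VV_diff F hx').hasFDerivAt.comp x (permL σ).hasFDerivAt
  change fderiv ℝ (F.1 ∘ permL σ) x _ = _
  rw [h.fderiv]
  simp only [ContinuousLinearMap.comp_apply, permL_apply, pd]
  congr 1
  funext k
  simp only [Function.comp, Pi.single_apply, Equiv.Perm.eq_inv_iff_eq]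

theorem del_mulop (i : Fin N) (a : (Fin N → ℝ) → ℝ) (ha : ContDiffOn ℝ (⊤ : ℕ∞) a (Omega N))
    (F : VV N) {x : Fin N → ℝ} (hx : x ∈ Omega N) (a' : (Fin N → ℝ) →L[ℝ] ℝ)
    (h : HasFDerivAt a a' x) :
    (del i (mulop a ha F)).1 x = a x * (del i F).1 x + a' (Pi.single i 1) * F.1 x := by
  rw [del_apply _ _ hx, del_apply _ _ hx]
  change fderiv ℝ (fun x => a x * F.1 x) x _ = _
  rw [(h.fun_mul (VV_diff F hx).hasFDerivAt).fderiv]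
  simp [pd, mul_comm]

theorem del_Xop (i j : Fin N) (F : VV N) {x : Fin N → ℝ} (hx : x ∈ Omega N) :
    (del i (Xop j F)).1 x = x j * (del i F).1 x + (if j = i then 1 else 0) * F.1 x := by
  have := del_mulop i (fun x => x j) (contDiff_apply ℝ ℝ j).contDiffOn F hx _ (hasFDerivAt_apply j x)
  unfold Xop
  rw [this]
  simp [Pi.single_apply]

theorem del_Yop (i j k : Fin N) (hjk : j ≠ k) (F : VV N) {x : Fin N → ℝ} (hx : x ∈ Omega N) :
    (del i (Yop j k F)).1 x = (x j - x k)⁻¹ * (del i F).1 x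
      - ((if j = i then 1 else 0) - (if k = i then 1 else 0)) * ((x j - x k)⁻¹) ^ 2 * F.1 x := by
  have h1 := ((hasFDerivAt_apply (𝕜 := ℝ) (F' := fun _ : Fin N => ℝ) j x).fun_sub
    (hasFDerivAt_apply (𝕜 := ℝ) (F' := fun _ : Fin N => ℝ) k x))
  have h2 := (hasDerivAt_inv (Omega_ne hx hjk)).comp_hasFDerivAt x h1
  have := del_mulop i (fun x => (x j - x k)⁻¹) (Y_smooth j k) F hx _ h2
  unfold Yop
  rw [this]
  simp [Pi.single_apply]
  ring

def Tp (i j : Fin N) : Module.End ℝ (VV N) := Yop i j * (1 - Pop (Equiv.swap i j))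

theorem Tp_apply (i j : Fin N) (F : VV N) (x : Fin N → ℝ) :
    (Tp i j F).1 x = (x i - x j)⁻¹ * (F.1 x - F.1 (x ∘ Equiv.swap i j)) := rfl

theorem Tp_self (i : Fin N) : Tp i i = 0 := by
  apply End_ext
  intro F x hx
  rw [Tp_apply]; simp

theorem del_Tp (i j k : Fin N) (hjk : j ≠ k) (F : VV N) {x : Fin N → ℝ} (hx : x ∈ Omega N) :
    (del i (Tp j k F)).1 x =
     (x j - x k)⁻¹ * ((del i F).1 x - (del (Equiv.swap j k i) F).1 (x ∘ Equiv.swap j k))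
      - ((if j = i then 1 else 0) - (if k = i then 1 else 0)) * ((x j - x k)⁻¹) ^ 2 *
        (F.1 x - F.1 (x ∘ Equiv.swap j k)) := by
  unfold Tp
  rw [Module.End.mul_apply, del_Yop _ _ _ hjk _ hx, LinearMap.sub_apply, map_sub]
  change _ * ((del i F).1 x - (del i (Pop _ F)).1 x) - _ * (F.1 x - F.1 (x ∘ Equiv.swap j k)) = _
  rw [del_Pop _ _ _ hx, Equiv.swap_inv]

theorem del_comm (i j : Fin N) : del i * del j = del j * del i := by
  apply End_ext
  intro F x hx
  have key : ∀ i j, ((del i * del j) F).1 x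
      = fderiv ℝ (fderiv ℝ F.1) x (Pi.single i 1) (Pi.single j 1) := by
    intro i j
    rw [Module.End.mul_apply, del_apply _ _ hx,
      pd_congr (h := pd j F.1) (fun y hy => del_apply j F hy) i hx]
    have hd : DifferentiableAt ℝ (fderiv ℝ F.1) x :=
      ((F.2.1.fderiv_of_isOpen (m := (⊤ : ℕ∞)) isOpen_Omega (by simp)).contDiffAt
        (isOpen_Omega.mem_nhds hx)).differentiableAt (by simp)
    unfold pd
    rw [fderiv_clm_apply hd (differentiableAt_const _)]
    simp
  rw [key, key]
  have hs : IsSymmSndFDerivAt ℝ F.1 x :=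
    (F.2.1.contDiffAt (isOpen_Omega.mem_nhds hx)).isSymmSndFDerivAt (by simp; exact WithTop.coe_le_coe.2 (le_top (a := (2 : ℕ∞))))
  exact hs _ _

def br {A : Type*} [Ring A] (a b : A) : A := a * b - b * a

theorem br_neg {A : Type*} [Ring A] (a : A) : br a (-a) = 0 := by simp [br]

theorem br_sum {A : Type*} [Ring A] (a : A) (f : Fin N → A) : br a (∑ k, f k) = ∑ k, br a (f k) := by
  simp only [br, sum_sub_distrib, mul_sum, sum_mul]

theorem br_sum_sum {A : Type*} [Ring A] (e f : Fin N → A) :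
    br (∑ k, e k) (∑ k, f k) = ∑ k, ∑ l, br (e k) (f l) := by
  simp only [br, sum_sub_distrib, sum_mul_sum]
  rw [sum_comm (f := fun l k => f l * e k)]

theorem comm_gen {A : Type*} [Ring A] [Algebra ℝ A] (g : ℝ) (d e S T : A) (h5 : d * e = e * d)
    (h4 : br d T = br e S) (h3 : br S T = 0) : (d + g • S) * (e + g • T) = (e + g • T) * (d + g • S) := by
  unfold br at h3 h4
  rw [← sub_eq_zero]
  have : (d + g • S) * (e + g • T) - (e + g • T) * (d + g • S)
    = (d * e - e * d) + g • ((d * T - T * d) - (e * S - S * e))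
      + (g * g) • (S * T - T * S) := by
    simp only [add_mul, mul_add, smul_mul_assoc, mul_smul_comm, smul_sub, smul_add, mul_smul]
    abel
  rw [this, h3, h4, h5]
  simp

theorem br_del_Tp_zero (i j k : Fin N) (hij : i ≠ j) (hik : i ≠ k) : br (del i) (Tp j k) = 0 := by
  by_cases hjk : j = k
  · subst hjk; rw [Tp_self]; simp [br]
  apply End_ext
  intro F x hx
  change (del i (Tp j k F)).1 x - (Tp j k (del i F)).1 x = 0
  rw [del_Tp _ _ _ hjk _ hx, Tp_apply, Equiv.swap_apply_of_ne_of_ne hij hik]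
  simp [hij.symm, hik.symm]

theorem br_del_Tp (i j : Fin N) (hij : i ≠ j) :
    br (del i) (Tp j i) = br (del j) (Tp i j) := by
  apply End_ext
  intro F x hx
  change (del i (Tp j i F)).1 x - (Tp j i (del i F)).1 x
    = (del j (Tp i j F)).1 x - (Tp i j (del j F)).1 x
  rw [del_Tp _ _ _ hij.symm _ hx, del_Tp _ _ _ hij _ hx, Tp_apply, Tp_apply,
    Equiv.swap_apply_right, Equiv.swap_apply_right, Equiv.swap_comm j i]
  have h := Omega_ne hx hij
  have e : (x j - x i)⁻¹ = -(x i - x j)⁻¹ := by rw [← neg_sub, inv_neg]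
  rw [e]
  simp [hij, hij.symm]
  ring

theorem br_TT_self (i j : Fin N) : br (Tp i j) (Tp j i) = 0 := by
  have : Tp j i = - Tp i j := by
    apply End_ext
    intro F x hx
    change (Tp j i F).1 x = - (Tp i j F).1 x
    rw [Tp_apply, Tp_apply, Equiv.swap_comm j i, ← neg_sub (x i), inv_neg, neg_mul]
  rw [this]; exact br_neg _

theorem br_TT_disj (i j k l : Fin N) (hij : i ≠ j) (hil : i ≠ l) (hkj : k ≠ j) (hkl : k ≠ l) :
    br (Tp i k) (Tp j l) = 0 := by
  apply End_ext
  intro F x hx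
  change (Tp i k (Tp j l F)).1 x - (Tp j l (Tp i k F)).1 x = 0
  have e : (x ∘ Equiv.swap i k) ∘ Equiv.swap j l = (x ∘ Equiv.swap j l) ∘ Equiv.swap i k := by
    funext m
    simp only [Function.comp]
    congr 1
    simp only [Equiv.swap_apply_def]
    grind
  simp only [Tp_apply, e]
  simp only [Function.comp, Equiv.swap_apply_of_ne_of_ne hij hil,
    Equiv.swap_apply_of_ne_of_ne hkj hkl, Equiv.swap_apply_of_ne_of_ne hij.symm hkj.symm,
    Equiv.swap_apply_of_ne_of_ne hil.symm hkl.symm]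
  ring

theorem br_TT_three (i j k : Fin N) (hij : i ≠ j) (hik : i ≠ k) (hjk : j ≠ k) :
    br (Tp i k) (Tp j k) + br (Tp i k) (Tp j i) + br (Tp i j) (Tp j k) = 0 := by
  apply End_ext
  intro F x hx
  change ((Tp i k (Tp j k F)).1 x - (Tp j k (Tp i k F)).1 x)
    + ((Tp i k (Tp j i F)).1 x - (Tp j i (Tp i k F)).1 x)
    + ((Tp i j (Tp j k F)).1 x - (Tp j k (Tp i j F)).1 x) = 0
  have a1 : (x ∘ Equiv.swap i k) ∘ Equiv.swap j k = (x ∘ Equiv.swap i j) ∘ Equiv.swap i k := by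
    funext m
    simp only [Function.comp]
    congr 1
    simp only [Equiv.swap_apply_def]
    grind
  have a2 : (x ∘ Equiv.swap j k) ∘ Equiv.swap i j = (x ∘ Equiv.swap i j) ∘ Equiv.swap i k := by
    funext m
    simp only [Function.comp]
    congr 1
    simp only [Equiv.swap_apply_def]
    grind
  have b1 : (x ∘ Equiv.swap j k) ∘ Equiv.swap i k = (x ∘ Equiv.swap i j) ∘ Equiv.swap j k := by
    funext m
    simp only [Function.comp]
    congr 1
    simp only [Equiv.swap_apply_def]
    grind
  have b2 : (x ∘ Equiv.swap i k) ∘ Equiv.swap i j = (x ∘ Equiv.swap i j) ∘ Equiv.swap j k := by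
    funext m
    simp only [Function.comp]
    congr 1
    simp only [Equiv.swap_apply_def]
    grind
  simp only [Tp_apply, Equiv.swap_comm j i, a1, a2, b1, b2]
  simp only [Function.comp_apply, Equiv.swap_apply_left, Equiv.swap_apply_right,
    Equiv.swap_apply_of_ne_of_ne hij hik, Equiv.swap_apply_of_ne_of_ne hij.symm hjk,
    Equiv.swap_apply_of_ne_of_ne hik.symm hjk.symm]
  have h1 := Omega_ne hx hij
  have h2 := Omega_ne hx hij.symm
  have h3 := Omega_ne hx hik
  have h4 := Omega_ne hx hik.symm
  have h5 := Omega_ne hx hjk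
  have h6 := Omega_ne hx hjk.symm
  generalize F.1 ((x ∘ Equiv.swap i j) ∘ Equiv.swap i k) = A
  generalize F.1 ((x ∘ Equiv.swap i j) ∘ Equiv.swap j k) = B
  generalize F.1 (x ∘ Equiv.swap i j) = C
  generalize F.1 (x ∘ Equiv.swap i k) = D
  generalize F.1 (x ∘ Equiv.swap j k) = E
  have e1 : x j - x i = -(x i - x j) := by ring
  have e2 : x k - x i = -(x i - x k) := by ring
  have e3 : x k - x j = -(x j - x k) := by ring
  rw [e1]
  simp only [inv_neg]
  have key : (x j - x k)⁻¹ * (x i - x k)⁻¹ = (x i - x j)⁻¹ * ((x j - x k)⁻¹ - (x i - x k)⁻¹) := by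
    field_simp
    ring
  generalize (x j - x k)⁻¹ = p at *
  generalize (x i - x k)⁻¹ = q at *
  generalize (x i - x j)⁻¹ = r at *
  grind

theorem br_sum_TT (i j : Fin N) (hij : i ≠ j) : br (∑ k, Tp i k) (∑ l, Tp j l) = 0 := by
  have h0 : br (∑ k, Tp i k) (∑ l, Tp j l) = ∑ k, ∑ l, br (Tp i k) (Tp j l) := by
    exact br_sum_sum _ _
  have z1 : ∀ l, br (Tp i i) (Tp j l) = 0 := fun l => by rw [Tp_self]; simp [br]
  have z2 : ∀ k, br (Tp i k) (Tp j j) = 0 := fun k => by rw [Tp_self]; simp [br]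
  have z3 := br_TT_self i j
  have h1 : ∀ k l, br (Tp i k) (Tp j l) = (if k = l then br (Tp i k) (Tp j k) else 0)
      + (if l = i then br (Tp i k) (Tp j i) else 0)
      + (if k = j then br (Tp i j) (Tp j l) else 0) := by
    intro k l
    by_cases hkl : k = l
    · subst hkl
      by_cases hki : k = i
      · subst hki; simp [z1, hij]
      · by_cases hkj : k = j
        · subst hkj; simp [z2, hij.symm]
        · simp [hki, hkj]
    · by_cases hli : l = i
      · subst hli
        by_cases hkj : k = j
        · subst hkj; simp [z3, hkl]
        · simp [hkl, hkj]
      · by_cases hkj : k = j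
        · subst hkj; simp [hkl, hli]
        · simp only [hkl, hli, hkj, if_false, add_zero]
          exact br_TT_disj i j k l hij (Ne.symm hli) hkj hkl
  rw [h0]
  rw [sum_congr rfl fun k _ => sum_congr rfl fun l _ => h1 k l]
  simp only [sum_add_distrib, sum_ite_eq, sum_ite_eq', mem_univ, if_true]
  rw [sum_comm (f := fun k l => if k = j then br (Tp i j) (Tp j l) else 0)]
  simp only [sum_ite_eq', mem_univ, if_true]
  rw [← sum_add_distrib, ← sum_add_distrib]
  apply sum_eq_zero
  intro k _
  by_cases hki : k = i
  · subst hki; simp [z1, z3]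
  · by_cases hkj : k = j
    · subst hkj; simp [z2, z3]
    · exact br_TT_three i j k hij (Ne.symm hki) (Ne.symm hkj)

def Dop (g : ℝ) (i : Fin N) : Module.End ℝ (VV N) := del i + g • ∑ k, Tp i k

theorem Dop_comm (g : ℝ) (i j : Fin N) : Commute (Dop g i) (Dop g j) := by
  by_cases hij : i = j
  · subst hij; exact Commute.refl _
  have h1 : br (del i) (∑ k, Tp j k) = br (del i) (Tp j i) := by
    have : br (del i) (∑ k, Tp j k) = ∑ k, br (del i) (Tp j k) := by
      exact br_sum _ _
    rw [this]
    apply sum_eq_single_of_mem _ (mem_univ i)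
    intro k _ hk
    exact br_del_Tp_zero i j k hij hk.symm
  have h2 : br (del j) (∑ k, Tp i k) = br (del j) (Tp i j) := by
    have : br (del j) (∑ k, Tp i k) = ∑ k, br (del j) (Tp i k) := by
      exact br_sum _ _
    rw [this]
    apply sum_eq_single_of_mem _ (mem_univ j)
    intro k _ hk
    exact br_del_Tp_zero j i k (Ne.symm hij) hk.symm
  have h3 := br_sum_TT i j hij
  have h4 := br_del_Tp i j hij
  have h5 := del_comm i j
  rw [← h1, ← h2] at h4
  exact comm_gen g _ _ _ _ h5 h4 h3

theorem Dop_apply (g : ℝ) (i : Fin N) (F : VV N) (x : Fin N → ℝ) :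
    (Dop g i F).1 x = (del i F).1 x
      + g * ∑ k, (x i - x k)⁻¹ * (F.1 x - F.1 (x ∘ Equiv.swap i k)) := by
  simp only [← Tp_apply]
  simp [Dop]

theorem Pop_Dop (g : ℝ) (σ : Equiv.Perm (Fin N)) (j : Fin N) :
    Pop σ * Dop g j = Dop g (σ j) * Pop σ := by
  apply End_ext
  intro F x hx
  change (Dop g j F).1 (x ∘ σ) = (Dop g (σ j) (Pop σ F)).1 x
  rw [Dop_apply, Dop_apply, del_Pop _ _ _ hx, show σ⁻¹ (σ j) = j from σ.symm_apply_apply j]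
  congr 2
  refine Eq.trans ?_ (Equiv.sum_comp σ _)
  apply sum_congr rfl
  intro k _
  rw [Pop_apply, Pop_apply]
  have : (x ∘ σ) ∘ Equiv.swap j k = (x ∘ Equiv.swap (σ j) (σ k)) ∘ σ := by
    funext m
    simp only [Function.comp]
    rw [Equiv.swap_apply_apply]
    simp
  rw [this]
  rfl

def Qop (g : ℝ) (i j : Fin N) : Module.End ℝ (VV N) := g • Pop (Equiv.swap i j)

theorem Qop_Dop (g : ℝ) (i j : Fin N) : Qop g i j * Dop g j = Dop g i * Qop g i j := by
  unfold Qop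
  rw [smul_mul_assoc, Pop_Dop, Equiv.swap_apply_right, mul_smul_comm]

theorem Qop_symm (g : ℝ) (i j : Fin N) : Qop g i j = Qop g j i := by
  unfold Qop; rw [Equiv.swap_comm]

theorem Dop_off (g : ℝ) (i j : Fin N) (hij : i ≠ j) :
    Dop g i * Xop j = Xop j * Dop g i - Qop g i j := by
  apply End_ext
  intro F x hx
  change (Dop g i (Xop j F)).1 x = x j * (Dop g i F).1 x - g * F.1 (x ∘ Equiv.swap i j)
  rw [Dop_apply, Dop_apply, del_Xop _ _ _ hx]
  have : ∑ k, (x i - x k)⁻¹ * ((Xop j F).1 x - (Xop j F).1 (x ∘ Equiv.swap i k))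
     = x j * ∑ k, (x i - x k)⁻¹ * (F.1 x - F.1 (x ∘ Equiv.swap i k))
       - F.1 (x ∘ Equiv.swap i j) := by
    rw [mul_sum, ← add_sum_erase univ _ (mem_univ j),
      ← add_sum_erase univ (fun k => x j * ((x i - x k)⁻¹ * _)) (mem_univ j), add_sub_right_comm]
    congr 1
    · have := Omega_ne hx hij
      simp only [Xop_apply, Function.comp_apply, Equiv.swap_apply_right]
      field_simp
      ring
    · apply sum_congr rfl
      intro k hk
      simp only [Xop_apply, Function.comp_apply,
        Equiv.swap_apply_of_ne_of_ne hij.symm (ne_of_mem_erase hk).symm]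
      ring
  rw [this]
  simp [hij.symm]
  ring

theorem Dop_diag (g : ℝ) (i : Fin N) :
    Dop g i * Xop i = Xop i * Dop g i + 1 + ∑ k ∈ univ.erase i, Qop g i k := by
  apply End_ext
  intro F x hx
  have hq : ((∑ k ∈ univ.erase i, Qop g i k) F).1 x
      = g * ∑ k ∈ univ.erase i, F.1 (x ∘ Equiv.swap i k) := by
    simp only [← Pop_apply]
    rw [mul_sum, LinearMap.sum_apply, Submodule.coe_sum, Finset.sum_apply]
    rfl
  change (Dop g i (Xop i F)).1 x = x i * (Dop g i F).1 x + F.1 x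
    + ((∑ k ∈ univ.erase i, Qop g i k) F).1 x
  rw [hq, Dop_apply, Dop_apply, del_Xop _ _ _ hx]
  have : ∑ k, (x i - x k)⁻¹ * ((Xop i F).1 x - (Xop i F).1 (x ∘ Equiv.swap i k))
     = x i * ∑ k, (x i - x k)⁻¹ * (F.1 x - F.1 (x ∘ Equiv.swap i k))
       + ∑ k ∈ univ.erase i, F.1 (x ∘ Equiv.swap i k) := by
    rw [mul_sum, ← add_sum_erase univ _ (mem_univ i),
      ← add_sum_erase univ (fun k => x i * ((x i - x k)⁻¹ * _)) (mem_univ i), add_assoc,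
      ← sum_add_distrib]
    congr 1
    · simp
    · apply sum_congr rfl
      intro k hk
      have := Omega_ne hx (ne_of_mem_erase hk).symm
      simp only [Xop_apply, Function.comp_apply, Equiv.swap_apply_left]
      field_simp
      ring
  rw [this]
  simp
  ring

theorem Xop_comm (i j : Fin N) : Commute (Xop i) (Xop j) := by
  apply End_ext
  intro F x hx
  change x i * (x j * F.1 x) = x j * (x i * F.1 x)
  ring

theorem SS_end (g : ℝ) (l n : ℕ) (F : VV N) (x : Fin N → ℝ) :
    ((∑ i, Xop i * Dop g i ^ l) ((∑ i, Xop i * Dop g i ^ n) F)).1 x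
      + (n : ℝ) * ((∑ i, Xop i * Dop g i ^ (l + n - 1)) F).1 x =
    ((∑ i, Xop i * Dop g i ^ n) ((∑ i, Xop i * Dop g i ^ l) F)).1 x
      + (l : ℝ) * ((∑ i, Xop i * Dop g i ^ (l + n - 1)) F).1 x := by
  rw [← Module.End.mul_apply, ← Module.End.mul_apply, ← add_nsmul_app, ← add_nsmul_app, alg_SS (Dop g) Xop (Qop g) (Dop_comm g) Xop_comm
    (Qop_Dop g) (Qop_symm g) (Dop_off g) (Dop_diag g) l n]

theorem Dunkl_bridge (g : ℝ) (i : Fin N) {f : (Fin N → ℝ) → ℝ} {F : VV N}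
    (h : Set.EqOn f F.1 (Omega N)) : Set.EqOn (Dunkl g i f) (Dop g i F).1 (Omega N) := by
  intro x hx
  rw [Dop_apply, del_apply _ _ hx, ← pd_congr h i hx]
  unfold Dunkl Delta
  rw [← add_sum_erase univ _ (mem_univ i)]
  simp only [sub_self, inv_zero, zero_mul, zero_add]
  congr 2
  apply sum_congr rfl
  intro k _
  rw [h hx, h ((Omega_comp _ x).2 hx), div_eq_inv_mul]

theorem Dunkl_iter (g : ℝ) (i : Fin N) (n : ℕ) {f : (Fin N → ℝ) → ℝ} {F : VV N}
    (h : Set.EqOn f F.1 (Omega N)) :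
    Set.EqOn ((Dunkl g i)^[n] f) ((Dop g i ^ n) F).1 (Omega N) := by
  induction n with
  | zero => simpa using h
  | succ n ih =>
    rw [Function.iterate_succ_apply', pow_succ']
    exact Dunkl_bridge g i ih

theorem Iop_bridge (g : ℝ) (n : ℕ) {f : (Fin N → ℝ) → ℝ} {F : VV N}
    (h : Set.EqOn f F.1 (Omega N)) :
    Set.EqOn (Iop g n f) ((∑ i, Dop g i ^ n) F).1 (Omega N) := by
  intro x hx
  have : ((∑ i, Dop g i ^ n) F).1 x = ∑ i, ((Dop g i ^ n) F).1 x := by simp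
  rw [this]
  exact sum_congr rfl fun i _ => Dunkl_iter g i n h hx

theorem Sop_bridge (g : ℝ) (n : ℕ) {f : (Fin N → ℝ) → ℝ} {F : VV N}
    (h : Set.EqOn f F.1 (Omega N)) :
    Set.EqOn (Sop g n f) ((∑ i, Xop i * Dop g i ^ n) F).1 (Omega N) := by
  intro x hx
  have : ((∑ i, Xop i * Dop g i ^ n) F).1 x = ∑ i, x i * ((Dop g i ^ n) F).1 x := by
    simp only [← Xop_apply]
    simp
  rw [this]
  exact sum_congr rfl fun i _ => congrArg (x i * ·) (Dunkl_iter g i n h hx)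
end An

theorem Sop_Iop_algebra {N : ℕ} (g : ℝ) (l n : ℕ) (hn : 1 ≤ n)
    (f : (Fin N → ℝ) → ℝ) (hf : ContDiffOn ℝ (⊤ : ℕ∞) f (Omega N))
    (x : Fin N → ℝ) (hx : x ∈ Omega N) :
    Iop g l (Iop g n f) x = Iop g n (Iop g l f) x ∧
    Sop g l (Iop g n f) x - Iop g n (Sop g l f) x = -(n : ℝ) * Iop g (l + n - 1) f x ∧
    Sop g l (Sop g n f) x - Sop g n (Sop g l f) x =
      ((l : ℝ) - (n : ℝ)) * Sop g (l + n - 1) f x := by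
  have h : Set.EqOn f (cut f hf).1 (Omega N) := fun y hy => (cut_apply f hf hy).symm
  generalize cut f hf = F at h
  have hI := fun m => Iop_bridge g m h
  have hS := fun m => Sop_bridge g m h
  refine ⟨?_, ?_, ?_⟩
  · rw [Iop_bridge g l (hI n) hx, Iop_bridge g n (hI l) hx, ← Module.End.mul_apply,
      alg_II (Dop g) (Dop_comm g)]
    rfl
  · rw [Sop_bridge g l (hI n) hx, Iop_bridge g n (hS l) hx, hI _ hx, ← Module.End.mul_apply,
      ← Module.End.mul_apply, alg_SI (Dop g) Xop (Qop g) (Dop_comm g) (Qop_Dop g) (Qop_symm g)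
        (Dop_off g) (Dop_diag g) l n hn]
    rw [LinearMap.add_apply, LinearMap.smul_apply]
    rw [Submodule.coe_add, Pi.add_apply, nsmul_app]
    ring
  · rw [Sop_bridge g l (hS n) hx, Sop_bridge g n (hS l) hx, hS _ hx]
    have := SS_end g l n F x
    linarith
end
end

section
/- The operators J_+ = Σ_{i=1}^N D_i², J_3 = Σ_{i=1}^N (x_i D_i + D_i x_i), and J_− = Σ_{i=1}^N x_i² (multiplication) satisfy the sl(2) relations [J_+, J_3] = 4 J_+, [J_−, J_3] = −4 J_−, and [J_+, J_−] = 2 J_3. -/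
open Finset

noncomputable section

/-- `J₊ = ∑_i D_i²`. -/
def Jplus {N : ℕ} (g : ℝ) (f : (Fin N → ℝ) → ℝ) : (Fin N → ℝ) → ℝ :=
  fun x => ∑ i, Dunkl g i (Dunkl g i f) x

/-- `J₃ = ∑_i (x_i D_i + D_i x_i)`. -/
def J3 {N : ℕ} (g : ℝ) (f : (Fin N → ℝ) → ℝ) : (Fin N → ℝ) → ℝ :=
  fun x => ∑ i, (x i * Dunkl g i f x + Dunkl g i (xmul i f) x)

/-- `J₋ = ∑_i x_i²` (multiplication operator). -/
def Jminus {N : ℕ} (f : (Fin N → ℝ) → ℝ) : (Fin N → ℝ) → ℝ :=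
  fun x => (∑ i, x i ^ 2) * f x

abbrev Sm {N : ℕ} (f : (Fin N → ℝ) → ℝ) : Prop := ContDiffOn ℝ (⊤ : ℕ∞) f (Omega N)

/-- Euler operator. -/
def Eul {N : ℕ} (f : (Fin N → ℝ) → ℝ) : (Fin N → ℝ) → ℝ := fun x => fderiv ℝ f x x

lemma Omega_open (N : ℕ) : IsOpen (Omega N) := by
  have : Omega N = ⋂ i : Fin N, ⋂ j : Fin N, {x : Fin N → ℝ | i ≠ j → x i ≠ x j} := by
    ext x
    simp only [Omega, Set.mem_setOf_eq, Set.mem_iInter, Function.Injective]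
    constructor
    · intro h i j hij he
      exact hij (h he)
    · intro h i j he
      by_contra hij
      exact h i j hij he
  rw [this]
  refine isOpen_iInter_of_finite fun i => isOpen_iInter_of_finite fun j => ?_
  by_cases hij : i = j
  · simp [hij]
  · simp only [ne_eq, hij, not_false_eq_true, forall_const]
    exact isOpen_ne_fun (continuous_apply i) (continuous_apply j)

lemma Omega_swap {N : ℕ} {x : Fin N → ℝ} (hx : x ∈ Omega N) (i j : Fin N) :
    x ∘ Equiv.swap i j ∈ Omega N := by
  exact Function.Injective.comp hx (Equiv.injective _)

lemma Omega_sub {N : ℕ} {x : Fin N → ℝ} (hx : x ∈ Omega N) {i j : Fin N} (h : j ≠ i) :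
    x i - x j ≠ 0 := by
  intro h'
  exact h (hx (sub_eq_zero.mp h')).symm

lemma Omega_nhds {N : ℕ} {x : Fin N → ℝ} (hx : x ∈ Omega N) : Omega N ∈ nhds x :=
  (Omega_open N).mem_nhds hx

lemma Sm.diff {N : ℕ} {f : (Fin N → ℝ) → ℝ} (hf : Sm f) {x : Fin N → ℝ} (hx : x ∈ Omega N) :
    DifferentiableAt ℝ f x :=
  (ContDiffOn.contDiffAt hf (Omega_nhds hx)).differentiableAt (by simp)

lemma Sm.fd {N : ℕ} {f : (Fin N → ℝ) → ℝ} (hf : Sm f) :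
    ContDiffOn ℝ (⊤ : ℕ∞) (fderiv ℝ f) (Omega N) :=
  ContDiffOn.fderiv_of_isOpen hf (Omega_open N) (by simp)

lemma Sm.fdiff {N : ℕ} {f : (Fin N → ℝ) → ℝ} (hf : Sm f) {x : Fin N → ℝ} (hx : x ∈ Omega N) :
    DifferentiableAt ℝ (fderiv ℝ f) x :=
  ((Sm.fd hf).contDiffAt (Omega_nhds hx)).differentiableAt (by simp)

/-- Swap as continuous linear map. -/
def swL {N : ℕ} (i j : Fin N) : (Fin N → ℝ) →L[ℝ] (Fin N → ℝ) :=
  ContinuousLinearMap.pi fun k => ContinuousLinearMap.proj (Equiv.swap i j k)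

lemma swL_apply {N : ℕ} (i j : Fin N) (x : Fin N → ℝ) : swL i j x = x ∘ Equiv.swap i j := rfl

lemma Sm.pd {N : ℕ} {f : (Fin N → ℝ) → ℝ} (hf : Sm f) (i : Fin N) : Sm (pd i f) :=
  ContDiffOn.clm_apply (Sm.fd hf) contDiffOn_const

lemma Sm.eul {N : ℕ} {f : (Fin N → ℝ) → ℝ} (hf : Sm f) : Sm (Eul f) :=
  ContDiffOn.clm_apply (Sm.fd hf) contDiffOn_id

lemma Sm.sw {N : ℕ} {f : (Fin N → ℝ) → ℝ} (hf : Sm f) (i j : Fin N) :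
    Sm (fun x => f (x ∘ Equiv.swap i j)) :=
  ContDiffOn.comp (g := f) (f := swL i j) hf (swL i j).contDiff.contDiffOn
    (fun x hx => Omega_swap hx i j)

lemma Sm.term {N : ℕ} {f : (Fin N → ℝ) → ℝ} (hf : Sm f) {i j : Fin N} (h : j ≠ i) :
    Sm (fun x => (f x - f (x ∘ Equiv.swap i j)) / (x i - x j)) := by
  refine ContDiffOn.div (ContDiffOn.sub hf (Sm.sw hf i j)) ?_ (fun x hx => Omega_sub hx h)
  exact (ContDiff.sub (contDiff_apply ℝ ℝ i) (contDiff_apply ℝ ℝ j)).contDiffOn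

lemma Sm.delta {N : ℕ} {f : (Fin N → ℝ) → ℝ} (hf : Sm f) (i : Fin N) : Sm (Delta i f) :=
  ContDiffOn.sum fun _ hj => Sm.term hf (Finset.ne_of_mem_erase hj)

lemma Sm.dunkl {N : ℕ} {f : (Fin N → ℝ) → ℝ} (hf : Sm f) (g : ℝ) (i : Fin N) :
    Sm (Dunkl g i f) :=
  ContDiffOn.add (Sm.pd hf i) (contDiffOn_const.mul (Sm.delta hf i))

lemma Sm.xmul {N : ℕ} {f : (Fin N → ℝ) → ℝ} (hf : Sm f) (i : Fin N) : Sm (xmul i f) :=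
  ContDiffOn.mul (contDiff_apply ℝ ℝ i).contDiffOn hf

lemma fderiv_congr_Omega {N : ℕ} {f h : (Fin N → ℝ) → ℝ} (e : Set.EqOn f h (Omega N))
    {x : Fin N → ℝ} (hx : x ∈ Omega N) : fderiv ℝ f x = fderiv ℝ h x :=
  Filter.EventuallyEq.fderiv_eq (Filter.mem_of_superset (Omega_nhds hx) e)

lemma Dunkl_congr {N : ℕ} {f h : (Fin N → ℝ) → ℝ} (e : Set.EqOn f h (Omega N)) (g : ℝ)
    (i : Fin N) : Set.EqOn (Dunkl g i f) (Dunkl g i h) (Omega N) := by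
  intro x hx
  simp only [Dunkl, pd, Delta, fderiv_congr_Omega e hx, e hx]
  simp only [e (Omega_swap hx i _)]

lemma Dunkl_lin {N : ℕ} {f h : (Fin N → ℝ) → ℝ} (hf : Sm f) (hh : Sm h) (g a b : ℝ)
    (i : Fin N) {x : Fin N → ℝ} (hx : x ∈ Omega N) :
    Dunkl g i (fun y => a * f y + b * h y) x = a * Dunkl g i f x + b * Dunkl g i h x := by
  have h1 : fderiv ℝ (fun y => a * f y + b * h y) x = a • fderiv ℝ f x + b • fderiv ℝ h x :=
    (((Sm.diff hf hx).hasFDerivAt.const_mul a).add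
      ((Sm.diff hh hx).hasFDerivAt.const_mul b)).fderiv
  have h2 : Delta i (fun y => a * f y + b * h y) x = a * Delta i f x + b * Delta i h x := by
    simp only [Delta, Finset.mul_sum, ← Finset.sum_add_distrib]
    exact Finset.sum_congr rfl fun j _ => by ring
  simp only [Dunkl, h2, pd, h1]
  simp
  ring

lemma hasF_coord {N : ℕ} (i : Fin N) (x : Fin N → ℝ) :
    HasFDerivAt (fun y : Fin N → ℝ => y i) (ContinuousLinearMap.proj (R := ℝ) i) x :=
  hasFDerivAt_apply i x

lemma pd_mul {N : ℕ} {f h : (Fin N → ℝ) → ℝ} {x : Fin N → ℝ} (hf : DifferentiableAt ℝ f x)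
    (hh : DifferentiableAt ℝ h x) (i : Fin N) :
    pd i (fun y => f y * h y) x = f x * pd i h x + h x * pd i f x := by
  have := (hf.hasFDerivAt.mul hh.hasFDerivAt).fderiv
  simp only [pd]
  erw [this]
  simp

/-- the constant -/
def cc (N : ℕ) (g : ℝ) : ℝ := N + g * ∑ i : Fin N, ∑ _j ∈ Finset.univ.erase i, (1 : ℝ)

lemma sum_pair {N : ℕ} (T : Fin N → Fin N → ℝ) (c : ℝ)
    (h : ∀ i j, j ≠ i → T i j + T j i = 2 * c) :
    ∑ i, ∑ j ∈ Finset.univ.erase i, T i j = (∑ i : Fin N, ∑ _j ∈ Finset.univ.erase i, (1 : ℝ)) * c := by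
  have e : ∀ F : Fin N → Fin N → ℝ, ∑ i, ∑ j ∈ Finset.univ.erase i, F i j
      = ∑ i, ∑ j, if j ≠ i then F i j else 0 := by
    intro F
    refine Finset.sum_congr rfl fun i _ => ?_
    rw [← Finset.sum_filter]
    congr 1
    ext j
    simp
  have s : ∑ i, ∑ j ∈ Finset.univ.erase i, T i j = ∑ i, ∑ j ∈ Finset.univ.erase i, T j i := by
    rw [e, e (fun i j => T j i), Finset.sum_comm]
    refine Finset.sum_congr rfl fun i _ => Finset.sum_congr rfl fun j _ => ?_
    simp only [ne_comm]
  have : ∑ i, ∑ j ∈ Finset.univ.erase i, T i j + ∑ i, ∑ j ∈ Finset.univ.erase i, T j i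
      = ∑ i : Fin N, ∑ _j ∈ Finset.univ.erase i, (2 * c) := by
    simp only [← Finset.sum_add_distrib]
    exact Finset.sum_congr rfl fun i _ => Finset.sum_congr rfl fun j hj =>
      h i j (Finset.ne_of_mem_erase hj)
  have t : ∑ i : Fin N, ∑ _j ∈ Finset.univ.erase i, (2 * c)
      = 2 * ((∑ i : Fin N, ∑ _j ∈ Finset.univ.erase i, (1 : ℝ)) * c) := by
    simp only [Finset.sum_mul, Finset.mul_sum, one_mul]
  linarith

lemma swap_symm_comp {N : ℕ} (x : Fin N → ℝ) (i j : Fin N) :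
    x ∘ Equiv.swap i j = x ∘ Equiv.swap j i := by rw [Equiv.swap_comm]

lemma Eul_eq {N : ℕ} (f : (Fin N → ℝ) → ℝ) (x : Fin N → ℝ) : Eul f x = ∑ i, x i * pd i f x := by
  simp only [Eul, pd]
  conv_lhs => rw [← Finset.univ_sum_single x, map_sum, Finset.univ_sum_single]
  refine Finset.sum_congr rfl fun i _ => ?_
  rw [← smul_eq_mul, ← map_smul, ← Pi.single_smul]
  simp

lemma J3_eq {N : ℕ} {f : (Fin N → ℝ) → ℝ} (hf : Sm f) (g : ℝ) :
    Set.EqOn (J3 g f) (fun x => 2 * Eul f x + cc N g * f x) (Omega N) := by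
  intro x hx
  have h1 : ∀ i, x i * Dunkl g i f x + Dunkl g i (xmul i f) x =
      2 * (x i * pd i f x) + f x + g * ∑ j ∈ Finset.univ.erase i,
        ((2 * x i * f x - (x i + x j) * f (x ∘ Equiv.swap i j)) / (x i - x j)) := by
    intro i
    have : pd i (xmul i f) x = x i * pd i f x + f x := by
      have h := pd_mul (hasF_coord i x).differentiableAt (Sm.diff hf hx) i
      have h' : pd i (fun y : Fin N → ℝ => y i) x = 1 := by
        simp [pd, (hasF_coord i x).fderiv]
      rw [h', mul_one] at h
      exact h
    have h2 : ∑ j ∈ Finset.univ.erase i,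
        ((2 * x i * f x - (x i + x j) * f (x ∘ Equiv.swap i j)) / (x i - x j))
        = x i * Delta i f x + Delta i (xmul i f) x := by
      simp only [Delta, xmul, Finset.mul_sum, ← Finset.sum_add_distrib]
      refine Finset.sum_congr rfl fun j _ => ?_
      simp only [Function.comp_apply, Equiv.swap_apply_left]
      ring
    rw [h2]
    simp only [Dunkl, this]
    ring
  have h3 := sum_pair (fun i j => (2 * x i * f x - (x i + x j) * f (x ∘ Equiv.swap i j)) / (x i - x j))
    (f x) (by
      intro i j hij
      have a := Omega_sub hx hij
      have b := Omega_sub hx hij.symm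
      simp only [swap_symm_comp x j i]
      have : x j - x i = -(x i - x j) := by ring
      rw [this, div_neg, ← sub_eq_add_neg, ← sub_div, div_eq_iff a]
      ring)
  simp only [J3, h1, Finset.sum_add_distrib, ← Finset.mul_sum, h3, Eul_eq, cc]
  simp
  ring

lemma Dunkl_Eul {N : ℕ} {f : (Fin N → ℝ) → ℝ} (hf : Sm f) (g : ℝ) (i : Fin N)
    {x : Fin N → ℝ} (hx : x ∈ Omega N) :
    Dunkl g i (Eul f) x = Eul (Dunkl g i f) x + Dunkl g i f x := by
  have hsym : fderiv ℝ (fderiv ℝ f) x (Pi.single i 1) x = fderiv ℝ (fderiv ℝ f) x x (Pi.single i 1) :=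
    ((ContDiffOn.contDiffAt hf (Omega_nhds hx)).isSymmSndFDerivAt (by simp; exact WithTop.coe_le_coe.mpr le_top)) _ _
  have h1 : pd i (Eul f) x = fderiv ℝ (fderiv ℝ f) x (Pi.single i 1) x + pd i f x := by
    have := ((Sm.fdiff hf hx).hasFDerivAt.clm_apply (hasFDerivAt_id x)).fderiv
    simp only [pd, Eul]
    erw [this]
    simp [add_comm]
  have h2 : Eul (pd i f) x = fderiv ℝ (fderiv ℝ f) x x (Pi.single i 1) := by
    have := ((Sm.fdiff hf hx).hasFDerivAt.clm_apply
      (hasFDerivAt_const (Pi.single i (1:ℝ) : Fin N → ℝ) x)).fderiv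
    simp only [Eul]
    erw [this]
    simp
  have h3 : ∀ j, j ≠ i → Eul (fun x => (f x - f (x ∘ Equiv.swap i j)) / (x i - x j)) x =
      (Eul f x - Eul f (x ∘ Equiv.swap i j)) / (x i - x j)
        - (f x - f (x ∘ Equiv.swap i j)) / (x i - x j) := by
    intro j hj
    have a := Omega_sub hx hj
    have s : HasFDerivAt (fun x => f (x ∘ Equiv.swap i j))
        ((fderiv ℝ f (x ∘ Equiv.swap i j)).comp (swL i j)) x :=
      HasFDerivAt.comp (g := f) (f := swL i j) x (Sm.diff hf (Omega_swap hx i j)).hasFDerivAt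
        (swL i j).hasFDerivAt
    have hq := (Sm.diff (Sm.term hf hj) hx).hasFDerivAt
    have hm := (hq.mul ((hasF_coord i x).sub (hasF_coord j x))).fderiv
    have hn := ((Sm.diff hf hx).hasFDerivAt.sub s).fderiv
    have e := fderiv_congr_Omega (f := (fun x => (f x - f (x ∘ Equiv.swap i j)) / (x i - x j)) *
        ((fun y : Fin N → ℝ => y i) - fun y => y j))
      (h := f - fun x => f (x ∘ Equiv.swap i j)) (by
        intro y hy
        exact div_mul_cancel₀ _ (Omega_sub hy hj)) hx
    rw [hm, hn] at e
    have e' := congrArg (fun L => L x) e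
    simp [swL_apply] at e'
    simp only [Eul]
    rw [← e']
    field_simp
    ring
  have h4 : Eul (Delta i f) x = Delta i (Eul f) x - Delta i f x := by
    have := (HasFDerivAt.fun_sum (u := Finset.univ.erase i) (fun j hj =>
      (Sm.diff (Sm.term hf (Finset.ne_of_mem_erase hj)) hx).hasFDerivAt)).fderiv
    have t : Eul (Delta i f) x = ∑ j ∈ Finset.univ.erase i,
        Eul (fun x => (f x - f (x ∘ Equiv.swap i j)) / (x i - x j)) x := by
      have := congrArg (fun L => L x) this
      simp only [_root_.sum_apply] at this
      exact this
    rw [t]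
    simp only [Delta, ← Finset.sum_sub_distrib]
    exact Finset.sum_congr rfl fun j hj => h3 j (Finset.ne_of_mem_erase hj)
  have h5 : Eul (Dunkl g i f) x = Eul (pd i f) x + g * Eul (Delta i f) x := by
    have := ((Sm.diff (Sm.pd hf i) hx).hasFDerivAt.add
      ((Sm.diff (Sm.delta hf i) hx).hasFDerivAt.const_mul g)).fderiv
    simp only [Eul]
    erw [this]
    simp
  rw [h5, h4, h2, ← hsym]
  simp only [Dunkl, h1]
  ring

lemma Dunkl_J3 {N : ℕ} {f : (Fin N → ℝ) → ℝ} (hf : Sm f) (g : ℝ) (i : Fin N)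
    {x : Fin N → ℝ} (hx : x ∈ Omega N) :
    Dunkl g i (J3 g f) x = J3 g (Dunkl g i f) x + 2 * Dunkl g i f x := by
  rw [Dunkl_congr (J3_eq hf g) g i hx, Dunkl_lin (Sm.eul hf) hf g _ _ i hx, Dunkl_Eul hf g i hx,
    J3_eq (Sm.dunkl hf g i) g hx]
  ring

lemma Sm.j3 {N : ℕ} {f : (Fin N → ℝ) → ℝ} (hf : Sm f) (g : ℝ) : Sm (J3 g f) :=
  ContDiffOn.congr (f := fun x => 2 * Eul f x + cc N g * f x)
    ((contDiffOn_const.mul (Sm.eul hf)).add (contDiffOn_const.mul hf)) (J3_eq hf g)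

lemma Dunkl_mul_inv {N : ℕ} {f : (Fin N → ℝ) → ℝ} (hf : Sm f) (g : ℝ) (i : Fin N)
    {x : Fin N → ℝ} (hx : x ∈ Omega N) :
    Dunkl g i (Jminus f) x = 2 * xmul i f x + Jminus (Dunkl g i f) x := by
  have hr : HasFDerivAt (fun y : Fin N → ℝ => ∑ k, y k ^ 2)
      (∑ k, (2 * x k) • ContinuousLinearMap.proj (R := ℝ) (φ := fun _ => ℝ) k) x := by
    refine HasFDerivAt.fun_sum fun k _ => ?_
    simpa using (hasF_coord k x).pow 2
  have h1 : pd i (Jminus f) x = (∑ k, x k ^ 2) * pd i f x + f x * (2 * x i) := by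
    have h := pd_mul hr.differentiableAt (Sm.diff hf hx) i
    have h' : pd i (fun y : Fin N → ℝ => ∑ k, y k ^ 2) x = 2 * x i := by
      simp [pd, hr.fderiv, _root_.sum_apply, Pi.single_apply]
    rw [h'] at h
    exact h
  have h2 : Delta i (Jminus f) x = (∑ k, x k ^ 2) * Delta i f x := by
    simp only [Delta, Jminus]
    rw [Finset.mul_sum]
    refine Finset.sum_congr rfl fun j _ => ?_
    have : ∑ k, (x ∘ Equiv.swap i j) k ^ 2 = ∑ k, x k ^ 2 :=
      Equiv.sum_comp (Equiv.swap i j) (fun k => x k ^ 2)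
    rw [this]
    ring
  simp only [Dunkl, h1, h2, xmul]
  simp only [Jminus, Dunkl]
  ring

lemma Sm.jm {N : ℕ} {f : (Fin N → ℝ) → ℝ} (hf : Sm f) : Sm (Jminus f) := by
  refine ContDiffOn.mul ?_ hf
  exact (ContDiff.sum fun k _ => (contDiff_apply ℝ ℝ k).pow 2).contDiffOn

theorem sl2_relations {N : ℕ} (g : ℝ)
    (f : (Fin N → ℝ) → ℝ) (hf : ContDiffOn ℝ (⊤ : ℕ∞) f (Omega N))
    (x : Fin N → ℝ) (hx : x ∈ Omega N) :
    Jplus g (J3 g f) x - J3 g (Jplus g f) x = 4 * Jplus g f x ∧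
    Jminus (J3 g f) x - J3 g (Jminus f) x = -4 * Jminus f x ∧
    Jplus g (Jminus f) x - Jminus (Jplus g f) x = 2 * J3 g f x := by
  refine ⟨?_, ?_, ?_⟩
  · have hD : ∀ i, Sm (Dunkl g i (Dunkl g i f)) := fun i => Sm.dunkl (Sm.dunkl hf g i) g i
    have h1 : ∀ i, Dunkl g i (Dunkl g i (J3 g f)) x =
        J3 g (Dunkl g i (Dunkl g i f)) x + 4 * Dunkl g i (Dunkl g i f) x := by
      intro i
      have e : Set.EqOn (Dunkl g i (J3 g f))
          (fun y => 1 * J3 g (Dunkl g i f) y + 2 * Dunkl g i f y) (Omega N) := by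
        intro y hy
        simp only [one_mul]
        exact Dunkl_J3 hf g i hy
      rw [Dunkl_congr e g i hx, Dunkl_lin (Sm.j3 (Sm.dunkl hf g i) g) (Sm.dunkl hf g i) g _ _ i hx,
        Dunkl_J3 (Sm.dunkl hf g i) g i hx]
      ring
    have hS : Sm (Jplus g f) := ContDiffOn.sum fun i _ => hD i
    have h2 : Eul (Jplus g f) x = ∑ i, Eul (Dunkl g i (Dunkl g i f)) x := by
      have := (HasFDerivAt.fun_sum (u := Finset.univ) (fun i _ =>
        (Sm.diff (hD i) hx).hasFDerivAt)).fderiv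
      simp only [Eul]
      erw [this]
      rw [_root_.sum_apply]
    have h3 : J3 g (Jplus g f) x = ∑ i, J3 g (Dunkl g i (Dunkl g i f)) x := by
      rw [J3_eq hS g hx, Finset.sum_congr rfl fun i _ => J3_eq (hD i) g hx]
      simp only [h2, Finset.sum_add_distrib, ← Finset.mul_sum]
      rfl
    rw [h3]
    simp only [Jplus, h1, Finset.sum_add_distrib, ← Finset.mul_sum]
    ring
  · have hr : HasFDerivAt (fun y : Fin N → ℝ => ∑ k, y k ^ 2)
        (∑ k, (2 * x k) • ContinuousLinearMap.proj (R := ℝ) (φ := fun _ => ℝ) k) x := by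
      refine HasFDerivAt.fun_sum fun k _ => ?_
      simpa using (hasF_coord k x).pow 2
    have h1 : Eul (Jminus f) x = (∑ k, x k ^ 2) * Eul f x + 2 * Jminus f x := by
      have := (hr.mul (Sm.diff hf hx).hasFDerivAt).fderiv
      simp only [Eul]
      erw [this]
      have e : ∑ k, 2 * x k * x k = 2 * ∑ k, x k ^ 2 := by
        rw [Finset.mul_sum]
        exact Finset.sum_congr rfl fun k _ => by ring
      simp [_root_.sum_apply, Jminus, e]
      ring
    rw [J3_eq (Sm.jm hf) g hx]
    simp only [h1]
    simp only [Jminus]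
    rw [J3_eq hf g hx]
    ring
  · have h1 : ∀ i, Dunkl g i (Dunkl g i (Jminus f)) x =
        2 * (x i * Dunkl g i f x + Dunkl g i (xmul i f) x)
          + (∑ k, x k ^ 2) * Dunkl g i (Dunkl g i f) x := by
      intro i
      have e : Set.EqOn (Dunkl g i (Jminus f))
          (fun y => 2 * xmul i f y + 1 * Jminus (Dunkl g i f) y) (Omega N) := by
        intro y hy
        simp only [one_mul]
        exact Dunkl_mul_inv hf g i hy
      rw [Dunkl_congr e g i hx, Dunkl_lin (Sm.xmul hf i) (Sm.jm (Sm.dunkl hf g i)) g _ _ i hx,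
        Dunkl_mul_inv (Sm.dunkl hf g i) g i hx]
      simp only [Jminus, xmul]
      ring
    simp only [Jplus, h1, Finset.sum_add_distrib, ← Finset.mul_sum, J3, Jminus]
    ring
end
end
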